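/- Let M₀ = [[A,B],[B*,D]] be a top-dominant block operator matrix satisfying conditions (i)–(iii), with self-adjoint closure M, d = max Spec(D), λ_e = inf(Spec_ess(M) ∩ (d,∞)), and Schur complement S(μ). Then the spectra of S and M coincide on (d, λ_e); Spec_ess(S) ∩ (d, λ_e) = ∅, i.e., for every λ ∈ (d, λ_e) one has 0 ∉ Spec_ess(S(λ)); and for every eigenvalue λ_j of M in (d, λ_e), dim ker(S(λ_j)) = dim ker(M − λ_j). -/

import Mathlib

open Filter Topology
open scoped ComplexInnerProductSpace

/-- A (possibly unbounded, densely defined) linear operator from `E` to `F`,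
encoded by its domain together with a total function that is linear on the domain. -/
structure PMap (E F : Type*) [NormedAddCommGroup E] [InnerProductSpace ℂ E]
    [NormedAddCommGroup F] [InnerProductSpace ℂ F] : Type _ where
  dom : Submodule ℂ E
  toFun : E → F
  map_add' : ∀ x ∈ dom, ∀ y ∈ dom, toFun (x + y) = toFun x + toFun y
  map_smul' : ∀ (c : ℂ), ∀ x ∈ dom, toFun (c • x) = c • toFun x

namespace PMap

variable {E F : Type*} [NormedAddCommGroup E] [InnerProductSpace ℂ E]
  [NormedAddCommGroup F] [InnerProductSpace ℂ F]

/-- `T` is self-adjoint : it is densely defined and the adjoint relation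
`⟪T x, y⟫ = ⟪x, z⟫` (for all `x` in the domain) holds iff `y` is in the domain
and `z = T y`. -/
def IsSelfAdjoint (T : PMap E E) : Prop :=
  Dense (T.dom : Set E) ∧
    ∀ y z : E, (∀ x ∈ T.dom, ⟪T.toFun x, y⟫ = ⟪x, z⟫) ↔ y ∈ T.dom ∧ z = T.toFun y

/-- The resolvent set : points `z` where `T - z` has an everywhere defined bounded inverse. -/
def resolventSet (T : PMap E E) : Set ℂ :=
  {z | ∃ R : E →L[ℂ] E, (∀ x ∈ T.dom, R (T.toFun x - z • x) = x) ∧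
      ∀ y : E, R y ∈ T.dom ∧ T.toFun (R y) - z • R y = y}

/-- The spectrum of `T`. -/
def spec (T : PMap E E) : Set ℂ := {z | z ∉ T.resolventSet}

/-- The real points of the spectrum of `T`. -/
def specR (T : PMap E E) : Set ℝ := {t : ℝ | (t : ℂ) ∈ T.spec}

/-- The (real) essential spectrum of `T`, via singular Weyl sequences. -/
def specEssR (T : PMap E E) : Set ℝ :=
  {t : ℝ | ∃ f : ℕ → E, (∀ n, f n ∈ T.dom) ∧ (∀ n, ‖f n‖ = 1) ∧
      (∀ y : E, Tendsto (fun n => ⟪y, f n⟫) atTop (𝓝 0)) ∧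
      Tendsto (fun n => ‖T.toFun (f n) - (t : ℂ) • f n‖) atTop (𝓝 0)}

/-- The eigenspace `ker (T - t)`. -/
def eigSp (T : PMap E E) (t : ℝ) : Submodule ℂ E where
  carrier := {x | x ∈ T.dom ∧ T.toFun x = (t : ℂ) • x}
  add_mem' := by
    rintro a b ⟨ha1, ha2⟩ ⟨hb1, hb2⟩
    exact ⟨T.dom.add_mem ha1 hb1, by rw [T.map_add' a ha1 b hb1, ha2, hb2, smul_add]⟩
  zero_mem' := by
    refine ⟨T.dom.zero_mem, ?_⟩
    have h := T.map_smul' 0 0 T.dom.zero_mem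
    simpa using h
  smul_mem' := by
    rintro c x ⟨hx1, hx2⟩
    refine ⟨T.dom.smul_mem c hx1, ?_⟩
    rw [T.map_smul' c x hx1, hx2]
    exact smul_comm c ((t : ℂ)) x

/-- The distance from `u` to the set `L` in the graph norm of `T`. -/
noncomputable def gdist (T : PMap E E) (u : E) (L : Set E) : ℝ :=
  sInf {r | ∃ v ∈ L, r = Real.sqrt (‖u - v‖ ^ 2 + ‖T.toFun u - T.toFun v‖ ^ 2)}

end PMap

/-- The Schur form `s(μ)[x,y] = 𝔞[x,y] − μ⟨x,y⟩ − ⟨(D−μ)⁻¹ B*x, B*y⟩`, where `fa` is the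
closed form of `A`, `Bs = B*`, and `RD μ = (D−μ)⁻¹` is the resolvent of `D`. -/
noncomputable def schurForm {H1 H2 : Type*} [NormedAddCommGroup H1] [InnerProductSpace ℂ H1]
    [NormedAddCommGroup H2] [InnerProductSpace ℂ H2]
    (fa : H1 → H1 → ℂ) (Bs : PMap H1 H2) (RD : ℂ → (H2 →L[ℂ] H2)) (μ : ℂ) (x y : H1) : ℂ :=
  fa x y - μ * ⟪x, y⟫ - ⟪RD μ (Bs.toFun x), Bs.toFun y⟫

/-!
For `w` in the domain of the Schur complement, the vector `(w, -(D - μ)⁻¹B*w)` lies in the domain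
of `M` and `M - μ` sends it to `(S(μ)w, 0)`; conversely every solution of `(M - μ)(x, y) = (h, 0)`
has this shape with `S(μ)x = h`. Hence the kernels correspond, and `S(μ)⁻¹` is the upper left corner
of `(M - μ)⁻¹`. The lift of a singular sequence of `S(μ)` is, up to normalisation, a singular
sequence of `M`: although `w ↦ (D - μ)⁻¹B*w` need not be bounded, its formal adjoint is
defined on the dense subspace `(D - μ) Dom(B)`, which is enough for weak convergence. Finally, a
self-adjoint operator is invertible at every real point that is neither an eigenvalue nor in the
essential spectrum.
-/

theorem tendsto_inner_zero_of_dense {𝕜 E ι : Type*} [RCLike 𝕜] [NormedAddCommGroup E]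
    [InnerProductSpace 𝕜 E] {l : Filter ι} {f : ι → E} {C : ℝ} (hf : ∀ i, ‖f i‖ ≤ C) {P : Set E}
    (hP : Dense P) (hfP : ∀ y ∈ P, Tendsto (fun i => inner 𝕜 y (f i)) l (𝓝 0)) (y : E) :
    Tendsto (fun i => inner 𝕜 y (f i)) l (𝓝 0) := by
  have h_equi : UniformEquicontinuous fun i y => inner 𝕜 y (f i) := by
    refine LipschitzWith.uniformEquicontinuous _ C.toNNReal fun i =>
      LipschitzWith.of_dist_le_mul fun y z => ?_
    rw [dist_eq_norm, dist_eq_norm, ← inner_sub_left, mul_comm]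
    exact (norm_inner_le_norm _ _).trans <| by gcongr; exact (hf i).trans (Real.le_coe_toNNReal C)
  exact h_equi.equicontinuous y |>.tendsto_of_mem_closure tendsto_const_nhds hfP (hP y)

namespace PMap

/-! ### Self-adjoint operators -/

section General

variable {E F : Type*} [NormedAddCommGroup E] [InnerProductSpace ℂ E]
  [NormedAddCommGroup F] [InnerProductSpace ℂ F]

theorem map_zero (T : PMap E F) : T.toFun 0 = 0 := by
  simpa using T.map_smul' 0 0 T.dom.zero_mem

theorem map_neg (T : PMap E F) {x : E} (hx : x ∈ T.dom) : T.toFun (-x) = -T.toFun x := by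
  simpa using T.map_smul' (-1) x hx

theorem map_smul_sub_smul (T : PMap E E) (z a : ℂ) {x : E} (hx : x ∈ T.dom) :
    T.toFun (a • x) - z • a • x = a • (T.toFun x - z • x) := by
  rw [T.map_smul' a x hx, smul_comm, smul_sub]

/-- `B'` is the (maximal) Hilbert space adjoint of `B`. -/
def IsAdjoint (B : PMap E F) (B' : PMap F E) : Prop :=
  (∀ y, y ∈ B'.dom ↔ ∃ z, ∀ x ∈ B.dom, ⟪B.toFun x, y⟫ = ⟪x, z⟫) ∧
    ∀ x ∈ B.dom, ∀ y ∈ B'.dom, ⟪B.toFun x, y⟫ = ⟪x, B'.toFun y⟫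

/-- `V` is a core for `T`: a subspace of the domain, dense in it for the graph norm. -/
def IsCore (T : PMap E F) (V : Submodule ℂ E) : Prop :=
  V ≤ T.dom ∧ ∀ y ∈ T.dom, ∀ δ : ℝ, 0 < δ →
    ∃ z ∈ V, ‖z - y‖ < δ ∧ ‖T.toFun z - T.toFun y‖ < δ

/-- `R` is the resolvent `(T - z)⁻¹`. -/
def IsResolvent (T : PMap E E) (z : ℂ) (R : E →L[ℂ] E) : Prop :=
  (∀ x ∈ T.dom, R (T.toFun x - z • x) = x) ∧
    ∀ y, R y ∈ T.dom ∧ T.toFun (R y) - z • R y = y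

theorem eigSp_eq_bot_of_mem_resolventSet {T : PMap E E} {t : ℝ} (ht : (t : ℂ) ∈ T.resolventSet) :
    T.eigSp t = ⊥ := by
  obtain ⟨R, hR, -⟩ := ht
  refine (Submodule.eq_bot_iff _).2 fun x ⟨hx, hxt⟩ => ?_
  rw [← hR x hx, hxt, sub_self, _root_.map_zero]

theorem IsCore.dense_image_sub_smul {T : PMap E E} {V : Submodule ℂ E} (hV : T.IsCore V) {z : ℂ}
    {R : E →L[ℂ] E} (hR : T.IsResolvent z R) :
    Dense ((fun x => T.toFun x - z • x) '' (V : Set E)) := by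
  refine Metric.dense_iff.2 fun w r hr => ?_
  obtain ⟨hy, hTy⟩ := hR.2 w
  obtain ⟨x, hxV, hx, hTx⟩ := hV.2 _ hy (r / (1 + ‖z‖)) (by positivity)
  refine ⟨_, ?_, x, hxV, rfl⟩
  rw [Metric.mem_ball, dist_eq_norm]
  calc ‖T.toFun x - z • x - w‖
      = ‖(T.toFun x - T.toFun (R w)) - z • (x - R w)‖ := by
        nth_rewrite 1 [← hTy]
        congr 1
        module
    _ ≤ ‖T.toFun x - T.toFun (R w)‖ + ‖z‖ * ‖x - R w‖ := by
        simpa only [norm_smul] using norm_sub_le (T.toFun x - T.toFun (R w)) (z • (x - R w))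
    _ < r / (1 + ‖z‖) + ‖z‖ * (r / (1 + ‖z‖)) :=
        add_lt_add_of_lt_of_le hTx (by gcongr)
    _ = r := by field_simp

/-- The graph of `T`. -/
def graph (T : PMap E F) : Submodule ℂ (E × F) where
  carrier := {p | p.1 ∈ T.dom ∧ p.2 = T.toFun p.1}
  add_mem' := by
    rintro p q ⟨hp, hTp⟩ ⟨hq, hTq⟩
    exact ⟨T.dom.add_mem hp hq, by rw [Prod.snd_add, Prod.fst_add, T.map_add' _ hp _ hq, hTp, hTq]⟩
  zero_mem' := ⟨T.dom.zero_mem, T.map_zero.symm⟩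
  smul_mem' := by
    rintro c p ⟨hp, hTp⟩
    exact ⟨T.dom.smul_mem c hp, by rw [Prod.smul_snd, Prod.smul_fst, T.map_smul' c _ hp, hTp]⟩

/-- The operator `T - z` as a bounded operator on the graph of `T`. -/
def graphSubSMul (T : PMap E E) (z : ℂ) : T.graph →L[ℂ] E :=
  (ContinuousLinearMap.snd ℂ E E - z • ContinuousLinearMap.fst ℂ E E) ∘L T.graph.subtypeL

theorem graphSubSMul_apply (T : PMap E E) (z : ℂ) (p : T.graph) :
    T.graphSubSMul z p = T.toFun p.1.1 - z • p.1.1 := by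
  rw [← p.2.2]
  rfl

theorem norm_graph_le (T : PMap E E) (z : ℂ) (p : T.graph) :
    ‖p‖ ≤ (1 + ‖z‖) * ‖p.1.1‖ + ‖T.graphSubSMul z p‖ := by
  have h_snd : ‖p.1.2‖ ≤ ‖T.graphSubSMul z p‖ + ‖z‖ * ‖p.1.1‖ := by
    have := norm_add_le (T.graphSubSMul z p) (z • p.1.1)
    rwa [graphSubSMul_apply, sub_add_cancel, ← p.2.2, norm_smul] at this
  have hz : 0 ≤ ‖z‖ * ‖p.1.1‖ := by positivity
  change max ‖p.1.1‖ ‖p.1.2‖ ≤ _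
  exact max_le (by linarith [norm_nonneg (T.graphSubSMul z p)]) (by linarith [norm_nonneg p.1.1])

theorem mem_resolventSet_of_bijective_graphSubSMul [CompleteSpace E] {T : PMap E E} {z : ℂ}
    (hT : IsClosed (T.graph : Set (E × E))) (hz : Function.Bijective (T.graphSubSMul z)) :
    z ∈ T.resolventSet := by
  have : CompleteSpace T.graph := hT.completeSpace_coe
  let e : T.graph ≃L[ℂ] E := .ofBijective (T.graphSubSMul z)
    (LinearMap.ker_eq_bot.2 hz.1) (LinearMap.range_eq_top.2 hz.2)
  refine ⟨ContinuousLinearMap.fst ℂ E E ∘L T.graph.subtypeL ∘L e.symm.toContinuousLinearMap,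
    fun x hx => ?_, fun y => ⟨(e.symm y).2.1, ?_⟩⟩
  · have hex : e ⟨(x, T.toFun x), hx, rfl⟩ = T.toFun x - z • x := T.graphSubSMul_apply z _
    simp [← hex]
  · exact (T.graphSubSMul_apply z _).symm.trans (e.apply_symm_apply y)

theorem mem_specEssR_of_dense {T : PMap E E} {t c : ℝ} {f : ℕ → E} (hfT : ∀ n, f n ∈ T.dom)
    (hc : 0 < c) (hf : ∀ n, c ≤ ‖f n‖) {P : Set E} (hP : Dense P)
    (hfP : ∀ y ∈ P, Tendsto (fun n => ⟪y, f n⟫) atTop (𝓝 0))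
    (hTf : Tendsto (fun n => T.toFun (f n) - (t : ℂ) • f n) atTop (𝓝 0)) : t ∈ T.specEssR := by
  let a : ℕ → ℂ := fun n => (‖f n‖ : ℂ)⁻¹
  have ha : IsBoundedUnder (· ≤ ·) atTop (norm ∘ a) := by
    refine isBoundedUnder_of ⟨c⁻¹, fun n => ?_⟩
    simpa [a] using inv_anti₀ hc (hf n)
  have h_unit (n : ℕ) : ‖a n • f n‖ = 1 :=
    norm_smul_inv_norm (norm_pos_iff.1 (hc.trans_le (hf n)))
  refine ⟨fun n => a n • f n, fun n => T.dom.smul_mem _ (hfT n), h_unit,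
    tendsto_inner_zero_of_dense (fun n => (h_unit n).le) hP fun y hy => ?_, ?_⟩
  · simpa only [inner_smul_right] using isBoundedUnder_le_mul_tendsto_zero ha (hfP y hy)
  · simpa only [T.map_smul_sub_smul _ _ (hfT _), norm_zero] using (ha.smul_tendsto_zero hTf).norm

namespace IsSelfAdjoint

variable {T : PMap E E} (hT : T.IsSelfAdjoint)
include hT

theorem inner_apply_left {x y : E} (hx : x ∈ T.dom) (hy : y ∈ T.dom) :
    ⟪T.toFun x, y⟫ = ⟪x, T.toFun y⟫ :=
  (hT.2 y (T.toFun y)).2 ⟨hy, rfl⟩ x hx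

theorem inner_sub_smul_left (t : ℝ) {x y : E} (hx : x ∈ T.dom) (hy : y ∈ T.dom) :
    ⟪T.toFun x - (t : ℂ) • x, y⟫ = ⟪x, T.toFun y - (t : ℂ) • y⟫ := by
  rw [inner_sub_left, inner_sub_right, hT.inner_apply_left hx hy, inner_smul_left, inner_smul_right,
    Complex.conj_ofReal]

theorem mem_eigSp_of_forall_inner_eq_zero {t : ℝ} {y : E}
    (hy : ∀ x ∈ T.dom, ⟪T.toFun x - (t : ℂ) • x, y⟫ = 0) : y ∈ T.eigSp t := by
  refine ((hT.2 y ((t : ℂ) • y)).1 fun x hx => ?_).imp_right Eq.symm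
  rw [← sub_eq_zero, ← hy x hx, inner_sub_left, inner_smul_left, inner_smul_right,
    Complex.conj_ofReal]

theorem isClosed_graph : IsClosed (T.graph : Set (E × E)) := by
  have h_graph : (T.graph : Set (E × E)) = ⋂ x ∈ T.dom, {p | ⟪T.toFun x, p.1⟫ = ⟪x, p.2⟫} := by
    ext p
    rw [Set.mem_iInter₂]
    exact (hT.2 p.1 p.2).symm
  rw [h_graph]
  exact isClosed_biInter fun x _ => isClosed_eq (by fun_prop) (by fun_prop)

theorem topologicalClosure_range_graphSubSMul [CompleteSpace E] {t : ℝ} (ht : T.eigSp t = ⊥) :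
    (T.graphSubSMul t).range.topologicalClosure = ⊤ := by
  rw [Submodule.topologicalClosure_eq_top_iff, eq_bot_iff, ← ht]
  refine fun y hy => hT.mem_eigSp_of_forall_inner_eq_zero fun x hx => ?_
  simpa only [ContinuousLinearMap.coe_coe, graphSubSMul_apply] using
    hy _ ⟨⟨(x, T.toFun x), hx, rfl⟩, rfl⟩

/- If `T - t` is not bounded below, approximate null vectors `f n` exist; as
`⟪(T - t) x, f n⟫ = ⟪x, (T - t) (f n)⟫ → 0` and `T - t` has dense range, they are singular. -/
theorem exists_antilipschitzWith_graphSubSMul [CompleteSpace E] {t : ℝ} (ht : T.eigSp t = ⊥)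
    (hess : t ∉ T.specEssR) : ∃ K, AntilipschitzWith K (T.graphSubSMul t) := by
  by_contra! h
  have h_approx (n : ℕ) : ∃ p : T.graph, ‖p‖ = 1 ∧ ((n : ℝ) + 2) * ‖T.graphSubSMul t p‖ < 1 := by
    by_contra! hn
    exact h ((n : NNReal) + 2) (antilipschitz_of_bound_of_norm_one (𝕜 := ℂ) _ hn)
  choose p hp hTp using h_approx
  have h_small (n : ℕ) : ‖T.graphSubSMul t (p n)‖ ≤ 1 / 2 := by
    nlinarith [hTp n, norm_nonneg (T.graphSubSMul t (p n)), Nat.cast_nonneg (α := ℝ) n]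
  have h_lower (n : ℕ) : 1 / (2 * (1 + ‖(t : ℂ)‖)) ≤ ‖(p n).1.1‖ := by
    rw [div_le_iff₀ (by positivity)]
    linarith [T.norm_graph_le t (p n), hp n, h_small n]
  have h_tendsto : Tendsto (fun n => T.graphSubSMul t (p n)) atTop (𝓝 0) := by
    refine squeeze_zero_norm (fun n => ?_) tendsto_one_div_add_atTop_nhds_zero_nat
    rw [le_div_iff₀ (by positivity)]
    nlinarith [hTp n, norm_nonneg (T.graphSubSMul t (p n))]
  have h_dense : Dense ((T.graphSubSMul t).range : Set E) :=
    Submodule.dense_iff_topologicalClosure_eq_top.2 (hT.topologicalClosure_range_graphSubSMul ht)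
  refine hess (mem_specEssR_of_dense (fun n => (p n).2.1) (by positivity) h_lower h_dense ?_ ?_)
  · rintro _ ⟨q, rfl⟩
    have h_inner := (tendsto_const_nhds (x := q.1.1)).inner (𝕜 := ℂ) h_tendsto
    simpa only [inner_zero_right, ContinuousLinearMap.coe_coe, graphSubSMul_apply,
      hT.inner_sub_smul_left t q.2.1 (p _).2.1] using h_inner
  · simpa only [graphSubSMul_apply] using h_tendsto

theorem mem_resolventSet_of_notMem_specEssR [CompleteSpace E] {t : ℝ} (ht : T.eigSp t = ⊥)
    (hess : t ∉ T.specEssR) : (t : ℂ) ∈ T.resolventSet := by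
  have : CompleteSpace T.graph := hT.isClosed_graph.completeSpace_coe
  exact mem_resolventSet_of_bijective_graphSubSMul hT.isClosed_graph <|
    (ContinuousLinearMap.bijective_iff_dense_range_and_antilipschitz _).2
      ⟨hT.topologicalClosure_range_graphSubSMul ht,
        hT.exists_antilipschitzWith_graphSubSMul ht hess⟩

end IsSelfAdjoint

end General

/-! ### Schur reductions -/

section SchurReduction

open WithLp (toLp)

variable {H₁ H₂ : Type*} [NormedAddCommGroup H₁] [InnerProductSpace ℂ H₁]
  [NormedAddCommGroup H₂] [InnerProductSpace ℂ H₂]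

/-- `S` is a Schur reduction of `M - μ` along `K`: eliminating the second component of
`(M - μ)(x, y) = (h, 0)` through `y = K x` leaves the equation `S x = h`. The map `K` need only be
meaningful on the first components that occur. -/
structure IsSchurReduction (M : PMap (WithLp 2 (H₁ × H₂)) (WithLp 2 (H₁ × H₂))) (μ : ℂ)
    (S : PMap H₁ H₁) (K : H₁ → H₂) : Prop where
  lift_mem : ∀ x ∈ S.dom, toLp 2 (x, K x) ∈ M.dom
  apply_lift : ∀ x ∈ S.dom,
    M.toFun (toLp 2 (x, K x)) - μ • toLp 2 (x, K x) = toLp 2 (S.toFun x, 0)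
  snd_eq : ∀ x y h, toLp 2 (x, y) ∈ M.dom →
    M.toFun (toLp 2 (x, y)) - μ • toLp 2 (x, y) = toLp 2 (h, 0) → y = K x

namespace IsSchurReduction

variable {M : PMap (WithLp 2 (H₁ × H₂)) (WithLp 2 (H₁ × H₂))} {μ : ℝ} {S : PMap H₁ H₁}
  {K : H₁ → H₂}

theorem mem_dom_and_apply_eq (hK : IsSchurReduction M μ S K) (hM : M.IsSelfAdjoint)
    (hS : S.IsSelfAdjoint) {x h : H₁} {y : H₂} (hxy : toLp 2 (x, y) ∈ M.dom)
    (hMxy : M.toFun (toLp 2 (x, y)) - (μ : ℂ) • toLp 2 (x, y) = toLp 2 (h, 0)) :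
    x ∈ S.dom ∧ S.toFun x = h := by
  refine ((hS.2 x h).1 fun w hw => ?_).imp_right Eq.symm
  have h_symm := hM.inner_sub_smul_left μ (hK.lift_mem w hw) hxy
  rw [hMxy, hK.apply_lift w hw] at h_symm
  simpa using h_symm

theorem mk_mem_eigSp (hK : IsSchurReduction M μ S K) {x : H₁} (hx : x ∈ S.eigSp 0) :
    toLp 2 (x, K x) ∈ M.eigSp μ := by
  refine ⟨hK.lift_mem x hx.1, sub_eq_zero.1 ?_⟩
  rw [hK.apply_lift x hx.1, hx.2, Complex.ofReal_zero, zero_smul]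
  rfl

theorem snd_eq_of_mem_eigSp (hK : IsSchurReduction M μ S K) {p : WithLp 2 (H₁ × H₂)}
    (hp : p ∈ M.eigSp μ) : p.snd = K p.fst :=
  hK.snd_eq p.fst p.snd 0 hp.1 (sub_eq_zero.2 hp.2)

theorem fst_mem_eigSp (hK : IsSchurReduction M μ S K) (hM : M.IsSelfAdjoint)
    (hS : S.IsSelfAdjoint) {p : WithLp 2 (H₁ × H₂)} (hp : p ∈ M.eigSp μ) :
    p.fst ∈ S.eigSp 0 := by
  obtain ⟨hx, hSx⟩ := hK.mem_dom_and_apply_eq hM hS hp.1 (sub_eq_zero.2 hp.2)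
  exact ⟨hx, hSx.trans (by rw [Complex.ofReal_zero, zero_smul])⟩

/-- The kernels of `M - μ` and of its Schur reduction correspond through the first component. -/
def eigSpEquiv (hK : IsSchurReduction M μ S K) (hM : M.IsSelfAdjoint) (hS : S.IsSelfAdjoint) :
    M.eigSp μ ≃ₗ[ℂ] S.eigSp 0 where
  toFun p := ⟨p.1.fst, hK.fst_mem_eigSp hM hS p.2⟩
  map_add' _ _ := rfl
  map_smul' _ _ := rfl
  invFun x := ⟨toLp 2 (x.1, K x.1), hK.mk_mem_eigSp x.2⟩
  left_inv p := by
    ext1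
    exact congrArg (fun y => toLp 2 (p.1.fst, y)) (hK.snd_eq_of_mem_eigSp p.2).symm
  right_inv _ := rfl

theorem zero_mem_resolventSet (hK : IsSchurReduction M μ S K) (hM : M.IsSelfAdjoint)
    (hS : S.IsSelfAdjoint) (hμ : (μ : ℂ) ∈ M.resolventSet) : 0 ∈ S.resolventSet := by
  obtain ⟨R, hR_left, hR_right⟩ := hμ
  refine ⟨WithLp.fstL 2 ℂ H₁ H₂ ∘L R ∘L
    (WithLp.prodContinuousLinearEquiv 2 ℂ H₁ H₂).symm.toContinuousLinearMap ∘L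
      ContinuousLinearMap.inl ℂ H₁ H₂, fun x hx => ?_, fun h => ?_⟩
  · have hRx := hR_left _ (hK.lift_mem x hx)
    rw [hK.apply_lift x hx] at hRx
    simp [hRx]
  · obtain ⟨h_mem, h_eq⟩ := hR_right (toLp 2 (h, 0))
    rw [zero_smul, sub_zero]
    exact hK.mem_dom_and_apply_eq hM hS h_mem h_eq

theorem mem_specEssR_of_zero_mem_specEssR (hK : IsSchurReduction M μ S K)
    (hdense : Dense {z | ∃ b, ∀ x ∈ S.dom, ⟪z, K x⟫ = ⟪b, x⟫}) (h0 : 0 ∈ S.specEssR) :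
    μ ∈ M.specEssR := by
  obtain ⟨f, hfS, hf, hf_weak, hSf⟩ := h0
  have h_snd : IsOpenMap (WithLp.snd : WithLp 2 (H₁ × H₂) → H₂) :=
    isOpenMap_snd.comp (WithLp.prodContinuousLinearEquiv 2 ℂ H₁ H₂).toHomeomorph.isOpenMap
  refine mem_specEssR_of_dense (f := fun n => toLp 2 (f n, K (f n)))
    (fun n => hK.lift_mem _ (hfS n)) one_pos (fun n => ?_) (hdense.preimage h_snd) ?_ ?_
  · exact (hf n).symm.trans_le (WithLp.norm_fst_le _ (toLp 2 (f n, K (f n))))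
  · rintro p ⟨b, hb⟩
    have h_inner (n : ℕ) : ⟪p, toLp 2 (f n, K (f n))⟫ = ⟪p.fst, f n⟫ + ⟪b, f n⟫ := by
      rw [← hb _ (hfS n)]
      rfl
    simpa only [h_inner, add_zero] using (hf_weak p.fst).add (hf_weak b)
  · refine tendsto_zero_iff_norm_tendsto_zero.2 ?_
    simpa only [hK.apply_lift _ (hfS _), WithLp.norm_toLp_fst, Complex.ofReal_zero, zero_smul,
      sub_zero] using hSf

theorem zero_mem_specR_iff [CompleteSpace H₁] [CompleteSpace H₂] (hK : IsSchurReduction M μ S K)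
    (hM : M.IsSelfAdjoint) (hS : S.IsSelfAdjoint) (hess : μ ∉ M.specEssR) :
    0 ∈ S.specR ↔ μ ∈ M.specR := by
  refine not_congr ⟨fun h0 => ?_, fun hμ => ?_⟩
  · refine hM.mem_resolventSet_of_notMem_specEssR ?_ hess
    have h_bot := eigSp_eq_bot_of_mem_resolventSet h0
    rw [← Submodule.subsingleton_iff_eq_bot] at h_bot ⊢
    exact (hK.eigSpEquiv hM hS).toEquiv.subsingleton
  · simpa using hK.zero_mem_resolventSet hM hS hμ

end IsSchurReduction

end SchurReduction

/-! ### Block operator matrices -/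

section BlockOperator

open WithLp (toLp)

variable {H₁ H₂ : Type*} [NormedAddCommGroup H₁] [InnerProductSpace ℂ H₁]
  [NormedAddCommGroup H₂] [InnerProductSpace ℂ H₂]

/-- `M` is the block operator matrix `[[A, B], [B', D]]` closed by means of the bounded operator
`G = cl((A - ν)⁻¹B)`, so that formally `A x + B y = A (x + G y) - ν G y`. The relation between `G`
and `B` is recorded as `(A - ν) G = B` on the domain of `B`. -/
structure IsBlockOperator (A : PMap H₁ H₁) (B : PMap H₂ H₁) (B' : PMap H₁ H₂) (D : PMap H₂ H₂)
    (ν : ℂ) (G : H₂ →L[ℂ] H₁) (M : PMap (WithLp 2 (H₁ × H₂)) (WithLp 2 (H₁ × H₂))) : Prop where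
  apply_G : ∀ y ∈ B.dom, G y ∈ A.dom ∧ A.toFun (G y) - ν • G y = B.toFun y
  mem_dom_iff : ∀ x y, toLp 2 (x, y) ∈ M.dom ↔ y ∈ D.dom ∧ x + G y ∈ A.dom
  apply_toLp : ∀ x y, toLp 2 (x, y) ∈ M.dom → x ∈ B'.dom → M.toFun (toLp 2 (x, y)) =
    toLp 2 (A.toFun (x + G y) - ν • G y, B'.toFun x + D.toFun y)

/-- `S` acts as the Schur complement `A - μ - B (D - μ)⁻¹B'`, where `R = (D - μ)⁻¹` and
`G = cl((A - ν)⁻¹B)`. Only an inclusion is asked of its domain. -/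
structure IsSchurComplement (A : PMap H₁ H₁) (B' : PMap H₁ H₂) (ν : ℂ) (G : H₂ →L[ℂ] H₁)
    (μ : ℂ) (R : H₂ →L[ℂ] H₂) (S : PMap H₁ H₁) : Prop where
  mem_dom : ∀ x ∈ S.dom, x ∈ B'.dom ∧ x - G (R (B'.toFun x)) ∈ A.dom
  apply_eq : ∀ x ∈ S.dom, S.toFun x =
    A.toFun (x - G (R (B'.toFun x))) - ν • (x - G (R (B'.toFun x))) + (ν - μ) • x

variable {A : PMap H₁ H₁} {B : PMap H₂ H₁} {B' : PMap H₁ H₂} {D : PMap H₂ H₂}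
  {ν : ℂ} {G : H₂ →L[ℂ] H₁} {M : PMap (WithLp 2 (H₁ × H₂)) (WithLp 2 (H₁ × H₂))}
  {R : H₂ →L[ℂ] H₂} {S : PMap H₁ H₁}

namespace IsBlockOperator

theorem mk_zero_left_mem_dom (h : IsBlockOperator A B B' D ν G M) (hBD : B.dom ≤ D.dom) {y : H₂}
    (hy : y ∈ B.dom) : toLp 2 (0, y) ∈ M.dom :=
  (h.mem_dom_iff 0 y).2 ⟨hBD hy, by simpa using (h.apply_G y hy).1⟩

theorem apply_mk_zero_left (h : IsBlockOperator A B B' D ν G M) (hBD : B.dom ≤ D.dom) {y : H₂}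
    (hy : y ∈ B.dom) : M.toFun (toLp 2 (0, y)) = toLp 2 (B.toFun y, D.toFun y) := by
  rw [h.apply_toLp 0 y (h.mk_zero_left_mem_dom hBD hy) B'.dom.zero_mem, zero_add, B'.map_zero,
    zero_add, (h.apply_G y hy).2]

theorem fst_mem_dom_adjoint (h : IsBlockOperator A B B' D ν G M) (hM : M.IsSelfAdjoint)
    (hD : D.IsSelfAdjoint) (hB : B.IsAdjoint B') (hBD : B.dom ≤ D.dom) {x : H₁} {y : H₂}
    (hxy : toLp 2 (x, y) ∈ M.dom) : x ∈ B'.dom := by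
  refine (hB.1 x).2 ⟨(M.toFun (toLp 2 (x, y))).snd - D.toFun y, fun z hz => ?_⟩
  have h_symm := hM.inner_apply_left (h.mk_zero_left_mem_dom hBD hz) hxy
  rw [h.apply_mk_zero_left hBD hz, WithLp.prod_inner_apply, WithLp.prod_inner_apply] at h_symm
  have hD_symm := hD.inner_apply_left (hBD hz) ((h.mem_dom_iff x y).1 hxy).1
  rw [inner_sub_right, ← hD_symm]
  simpa [eq_sub_iff_add_eq] using h_symm

theorem isSchurReduction (h : IsBlockOperator A B B' D ν G M) (hM : M.IsSelfAdjoint)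
    (hD : D.IsSelfAdjoint) (hB : B.IsAdjoint B') (hBD : B.dom ≤ D.dom) {μ : ℂ}
    (hR : D.IsResolvent μ R) (hS : IsSchurComplement A B' ν G μ R S) :
    IsSchurReduction M μ S fun x => -R (B'.toFun x) := by
  have h_mem (x : H₁) (hx : x ∈ S.dom) : toLp 2 (x, -R (B'.toFun x)) ∈ M.dom := by
    refine (h.mem_dom_iff _ _).2 ⟨D.dom.neg_mem (hR.2 _).1, ?_⟩
    rw [_root_.map_neg, ← sub_eq_add_neg]
    exact (hS.mem_dom x hx).2
  refine ⟨h_mem, fun x hx => ?_, fun x y v hxy hMxy => ?_⟩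
  · obtain ⟨hRx, hDRx⟩ := hR.2 (B'.toFun x)
    rw [h.apply_toLp _ _ (h_mem x hx) (hS.mem_dom x hx).1, hS.apply_eq x hx, _root_.map_neg,
      ← sub_eq_add_neg, D.map_neg hRx, ← WithLp.toLp_smul, ← WithLp.toLp_sub]
    congr 2
    · simp only [Prod.smul_mk, Prod.mk_sub_mk]
      congr 1
      · module
      · nth_rewrite 1 [← hDRx]
        module
  · obtain ⟨hy, -⟩ := (h.mem_dom_iff x y).1 hxy
    rw [h.apply_toLp _ _ hxy (h.fst_mem_dom_adjoint hM hD hB hBD hxy)] at hMxy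
    have h_snd : B'.toFun x + D.toFun y - μ • y = 0 := congrArg WithLp.snd hMxy
    have h_shift : D.toFun y - μ • y = -B'.toFun x := by
      rw [← sub_eq_zero, ← h_snd]
      abel
    rw [← hR.1 y hy, h_shift, _root_.map_neg]

end IsBlockOperator

theorem IsSchurComplement.dense_formalAdjoint_dom {μ : ℝ}
    (hS : IsSchurComplement A B' ν G μ R S) (hD : D.IsSelfAdjoint) (hB : B.IsAdjoint B')
    (hcore : D.IsCore B.dom) (hR : D.IsResolvent μ R) :
    Dense {z | ∃ b, ∀ x ∈ S.dom, ⟪z, -R (B'.toFun x)⟫ = ⟪b, x⟫} := by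
  refine (hcore.dense_image_sub_smul hR).mono ?_
  rintro _ ⟨y, hy, rfl⟩
  refine ⟨-B.toFun y, fun x hx => ?_⟩
  obtain ⟨hRx, hDRx⟩ := hR.2 (B'.toFun x)
  rw [inner_neg_right, inner_neg_left, hD.inner_sub_smul_left μ (hcore.1 hy) hRx, hDRx,
    hB.2 y hy x (hS.mem_dom x hx).1]

end BlockOperator

end PMap

theorem statement7_general {H₁ H₂ : Type*} [NormedAddCommGroup H₁] [InnerProductSpace ℂ H₁]
    [CompleteSpace H₁] [NormedAddCommGroup H₂] [InnerProductSpace ℂ H₂] [CompleteSpace H₂]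
    {A : PMap H₁ H₁} {B : PMap H₂ H₁} {B' : PMap H₁ H₂} {D : PMap H₂ H₂} {ν : ℂ} {μ : ℝ}
    {G : H₂ →L[ℂ] H₁} {R : H₂ →L[ℂ] H₂} {S : PMap H₁ H₁}
    {M : PMap (WithLp 2 (H₁ × H₂)) (WithLp 2 (H₁ × H₂))}
    (hD : D.IsSelfAdjoint) (hM : M.IsSelfAdjoint) (hS : S.IsSelfAdjoint)
    (hB : B.IsAdjoint B') (hcore : D.IsCore B.dom) (hR : D.IsResolvent μ R)
    (hblock : PMap.IsBlockOperator A B B' D ν G M)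
    (hschur : PMap.IsSchurComplement A B' ν G μ R S) (hess : μ ∉ M.specEssR) :
    (0 ∈ S.specR ↔ μ ∈ M.specR) ∧ 0 ∉ S.specEssR ∧
      Module.finrank ℂ (S.eigSp 0) = Module.finrank ℂ (M.eigSp μ) :=
  have hK := hblock.isSchurReduction hM hD hB hcore.1 hR hschur
  ⟨hK.zero_mem_specR_iff hM hS hess,
    fun h0 => hess <|
      hK.mem_specEssR_of_zero_mem_specEssR (hschur.dense_formalAdjoint_dom hD hB hcore hR) h0,
    (hK.eigSpEquiv hM hS).finrank_eq.symm⟩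

/-- Lemma 4.1 of the paper.  For a top-dominant block operator matrix
`M₀ = [[A,B],[B*,D]]` with self-adjoint closure `M`, `d = max Spec D`,
`λ_e = inf (Spec_ess M ∩ (d,∞))` and Schur complement `S(μ)`:
the spectra of `S` and `M` coincide on `(d, λ_e)`; one has
`Spec_ess(S) ∩ (d, λ_e) = ∅`, i.e. `0 ∉ Spec_ess (S μ)` for each `μ ∈ (d, λ_e)`; and for
every eigenvalue `μ` of `M` in `(d, λ_e)`, `dim ker (S μ) = dim ker (M − μ)`. -/
theorem statement7
    {H1 : Type*} [NormedAddCommGroup H1] [InnerProductSpace ℂ H1] [CompleteSpace H1]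
    {H2 : Type*} [NormedAddCommGroup H2] [InnerProductSpace ℂ H2] [CompleteSpace H2]
    -- (i) `A` and `D` are self-adjoint on `H1` and `H2` respectively
    (A : PMap H1 H1) (hA : A.IsSelfAdjoint)
    (D : PMap H2 H2) (hD : D.IsSelfAdjoint)
    -- (ii) `A` bounded below, `D` bounded above with `d = max Spec D`,
    -- `B` closed and densely defined from `H2` to `H1`
    (hAbelow : ∃ c : ℝ, ∀ x ∈ A.dom, c * ‖x‖ ^ 2 ≤ (⟪A.toFun x, x⟫ : ℂ).re)
    (d : ℝ) (hd : IsGreatest D.specR d)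
    (hDabove : ∀ y ∈ D.dom, (⟪D.toFun y, y⟫ : ℂ).re ≤ d * ‖y‖ ^ 2)
    (B : PMap H2 H1)
    (hBclosed : IsClosed {p : H2 × H1 | p.1 ∈ B.dom ∧ p.2 = B.toFun p.1})
    (hBdense : Dense (B.dom : Set H2))
    -- `Bs` is the adjoint `B*` of `B`
    (Bs : PMap H1 H2)
    (hBs : (∀ y : H1, y ∈ Bs.dom ↔ ∃ z : H2, ∀ x ∈ B.dom, ⟪B.toFun x, y⟫ = ⟪x, z⟫) ∧
      ∀ x ∈ B.dom, ∀ y ∈ Bs.dom, ⟪B.toFun x, y⟫ = ⟪x, Bs.toFun y⟫)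
    -- `Fa = Dom(|A|^{1/2}) = Dom(𝔞)`, the domain of the closed form `fa = 𝔞` of `A`
    (Fa : Submodule ℂ H1) (fa : H1 → H1 → ℂ)
    (hAdomFa : (A.dom : Set H1) ⊆ Fa)
    (hfaHerm : ∀ x ∈ Fa, ∀ y ∈ Fa, fa x y = starRingEnd ℂ (fa y x))
    (hfaA : ∀ x ∈ A.dom, ∀ y ∈ Fa, fa x y = ⟪A.toFun x, y⟫)
    -- (iii) `Dom(|A|^{1/2}) ⊆ Dom(B*)`, `Dom(B) ⊆ Dom(D)`, and `Dom(B)` is a core for `D`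
    (hFaBs : (Fa : Set H1) ⊆ (Bs.dom : Set H1))
    (hBD : B.dom ≤ D.dom)
    (hBcore : ∀ y ∈ D.dom, ∀ δ : ℝ, 0 < δ →
      ∃ z ∈ B.dom, ‖z - y‖ < δ ∧ ‖D.toFun z - D.toFun y‖ < δ)
    -- `ν < min Spec A`, with `RA = (A − ν)⁻¹` and `G = cl((A − ν)⁻¹ B)` bounded,
    -- and `RD z = (D − z)⁻¹` for `Re z > d`
    (ν : ℝ) (hν : ∃ c : ℝ, ν < c ∧ ∀ x ∈ A.dom, c * ‖x‖ ^ 2 ≤ (⟪A.toFun x, x⟫ : ℂ).re)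
    (RA : H1 →L[ℂ] H1)
    (hRA : (∀ x ∈ A.dom, RA (A.toFun x - (ν : ℂ) • x) = x) ∧
      ∀ y : H1, RA y ∈ A.dom ∧ A.toFun (RA y) - (ν : ℂ) • RA y = y)
    (G : H2 →L[ℂ] H1) (hG : ∀ y ∈ B.dom, G y = RA (B.toFun y))
    (RD : ℂ → (H2 →L[ℂ] H2))
    (hRD : ∀ z : ℂ, d < z.re →
      (∀ y ∈ D.dom, RD z (D.toFun y - z • y) = y) ∧
      ∀ w : H2, RD z w ∈ D.dom ∧ D.toFun (RD z w) - z • RD z w = w)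
    -- `M` is the self-adjoint closure of `M₀`
    (M : PMap (WithLp 2 (H1 × H2)) (WithLp 2 (H1 × H2))) (hM : M.IsSelfAdjoint)
    (hMdom : ∀ (x : H1) (y : H2),
      (WithLp.equiv 2 (H1 × H2)).symm (x, y) ∈ M.dom ↔ y ∈ D.dom ∧ x + G y ∈ A.dom)
    (hMact : ∀ (x : H1) (y : H2),
      (WithLp.equiv 2 (H1 × H2)).symm (x, y) ∈ M.dom → x ∈ Bs.dom →
      M.toFun ((WithLp.equiv 2 (H1 × H2)).symm (x, y)) =
        (WithLp.equiv 2 (H1 × H2)).symm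
          (A.toFun (x + G y) - (ν : ℂ) • G y, Bs.toFun x + D.toFun y))
    -- the Schur complement `S μ` for real `μ > d`
    (S : ℝ → PMap H1 H1)
    (hSsa : ∀ μ : ℝ, d < μ → (S μ).IsSelfAdjoint)
    (hSdom : ∀ μ : ℝ, d < μ → ∀ x : H1,
      x ∈ (S μ).dom ↔ x ∈ Fa ∧ x - G (RD (μ : ℂ) (Bs.toFun x)) ∈ A.dom)
    (hSact : ∀ μ : ℝ, d < μ → ∀ x ∈ (S μ).dom,
      (S μ).toFun x = A.toFun (x - G (RD (μ : ℂ) (Bs.toFun x)))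
        - (ν : ℂ) • (x - G (RD (μ : ℂ) (Bs.toFun x))) + ((ν : ℂ) - (μ : ℂ)) • x)
    -- `lamE`: the interval `(d, lamE)` lies below the essential spectrum of `M`
    -- (`lamE = inf (Spec_ess M ∩ (d, ∞))`)
    (lamE : ℝ) (hlamE : ∀ t ∈ M.specEssR, d < t → lamE ≤ t)
    :
    (∀ μ : ℝ, μ ∈ Set.Ioo d lamE → ((0 : ℝ) ∈ (S μ).specR ↔ μ ∈ M.specR)) ∧
    (∀ μ : ℝ, μ ∈ Set.Ioo d lamE → (0 : ℝ) ∉ (S μ).specEssR) ∧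
    (∀ μ : ℝ, μ ∈ Set.Ioo d lamE → M.eigSp μ ≠ ⊥ →
      Module.finrank ℂ ((S μ).eigSp 0) = Module.finrank ℂ (M.eigSp μ)) := by
  have key (μ : ℝ) (hμ : μ ∈ Set.Ioo d lamE) :=
    statement7_general hD hM (hSsa μ hμ.1) hBs ⟨hBD, hBcore⟩ (hRD μ hμ.1)
      ⟨fun y hy => hG y hy ▸ hRA.2 (B.toFun y), hMdom, hMact⟩
      ⟨fun x hx => ((hSdom μ hμ.1 x).1 hx).imp_left (hFaBs ·), hSact μ hμ.1⟩
      fun hess => hμ.2.not_ge (hlamE μ hess hμ.1)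
  exact ⟨fun μ hμ => (key μ hμ).1, fun μ hμ => (key μ hμ).2.1, fun μ hμ _ => (key μ hμ).2.2⟩
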